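/- Let (R, m) be a local ring, M a Cohen-Macaulay R-module of finite injective dimension, and a, b ideals with a ∼_{(0;M)} b. Assume depth R = depth R/a = depth R/b. Then M/aM is Cohen-Macaulay if and only if M/bM is Cohen-Macaulay. -/

import Mathlib

universe u

open RingTheory.Sequence IsLocalRing

/-- The colon submodule `N :_M a = {m ∈ M | a m ⊆ N}`. -/
def Submodule.colonBy {R M : Type*} [CommRing R] [AddCommGroup M] [Module R M]
    (N : Submodule R M) (a : Ideal R) : Submodule R M :=
  ⨅ r ∈ a, N.comap (LinearMap.lsmul R M r)
/-- The `M`-grade of an ideal `c`: the length of a maximal `M`-regular sequence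
with entries in `c`. -/
noncomputable def Module.grade (R : Type*) [CommRing R] (c : Ideal R)
    (M : Type*) [AddCommGroup M] [Module R M] : ℕ :=
  sSup {n | ∃ rs : List R, rs.length = n ∧ (∀ r ∈ rs, r ∈ c) ∧
    RingTheory.Sequence.IsRegular M rs}
/-- The dimension of a module: the Krull dimension of `R / ann M`. -/
noncomputable def Module.dim (R : Type*) [CommRing R]
    (M : Type*) [AddCommGroup M] [Module R M] : WithBot (WithTop ℕ) :=
  ringKrullDim (R ⧸ Module.annihilator R M)

/-- A module over a local ring is Cohen–Macaulay if its depth (the grade of the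
maximal ideal) equals its dimension. -/
def Module.IsCM (R : Type*) [CommRing R] [IsLocalRing R]
    (M : Type*) [AddCommGroup M] [Module R M] : Prop :=
  (Module.grade R (IsLocalRing.maximalIdeal R) M : WithBot (WithTop ℕ)) = Module.dim R M
open CategoryTheory in
/-- A module has finite injective dimension if there is `n` such that
`Ext^i(N, M) = 0` for all modules `N` and all `i > n`. -/
def Module.HasFiniteInjDim (R M : Type u) [CommRing R] [AddCommGroup M] [Module R M] : Prop :=
  ∃ n : ℕ, ∀ (N : ModuleCat.{u} R) (i : ℕ), n < i →
    Subsingleton (((Ext R (ModuleCat.{u} R) i).obj (Opposite.op N)).obj (ModuleCat.of R M))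

/-- A Noetherian local ring is Gorenstein if it has finite injective dimension
as a module over itself. -/
def IsGorensteinLocalRing (S : Type u) [CommRing S] [IsLocalRing S] [IsNoetherianRing S] :
    Prop :=
  Module.HasFiniteInjDim S S

open CategoryTheory in
lemma shortExact_shortComplexOfCompEqZero {R : Type u} [CommRing R] {N₁ N₂ N₃ : Type u}
    [AddCommGroup N₁] [Module R N₁] [AddCommGroup N₂] [Module R N₂] [AddCommGroup N₃] [Module R N₃]
    {f : N₁ →ₗ[R] N₂} {g : N₂ →ₗ[R] N₃} (hf : Function.Injective f) (hg : Function.Surjective g)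
    (hfg : Function.Exact f g) :
    (ModuleCat.shortComplexOfCompEqZero f g hfg.linearMap_comp_eq_zero).ShortExact where
  exact := ModuleCat.shortComplex_exact _ hfg
  mono_f := (ModuleCat.mono_iff_injective _).mpr hf
  epi_g := (ModuleCat.epi_iff_surjective _).mpr hg

open CategoryTheory Abelian in
/-- Vanishing of `CategoryTheory.Ext` in a positive degree implies vanishing of `Abelian.Ext`. -/
lemma subsingleton_abelianExt_of_subsingleton_ext {R : Type u} [CommRing R]
    (N M : ModuleCat.{u} R) (i : ℕ)
    (h : Subsingleton (((_root_.Ext R (ModuleCat.{u} R) (i + 1)).obj (Opposite.op N)).obj M)) :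
    Subsingleton (Ext N M (i + 1)) := by
  let P := projectiveResolution N
  have hz : Limits.IsZero ((P.complex.linearYonedaObj R M).homology (i + 1)) :=
    (ModuleCat.isZero_of_subsingleton _).of_iso (P.isoExt (i + 1) M).symm
  rw [← HomologicalComplex.exactAt_iff_isZero_homology,
    HomologicalComplex.exactAt_iff' _ i (i + 1) (i + 2) (by simp) (by simp),
    ShortComplex.moduleCat_exact_iff] at hz
  refine subsingleton_of_forall_eq 0 fun α ↦ ?_
  obtain ⟨f, hf, rfl⟩ := P.extMk_surjective α (i + 2) rfl
  exact (P.extMk_eq_zero_iff f (i + 2) rfl hf i rfl).mpr (hz f hf)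

open CategoryTheory Abelian in
/-- A consequence of Nakayama's lemma: if `x` is an `N`-regular element of the maximal ideal,
then `Ext^{i+1}(N/xN, M) = 0` forces `Ext^i(N, M) = 0`. -/
lemma subsingleton_ext_of_subsingleton_ext_quotSMulTop {R : Type u} [CommRing R] [IsLocalRing R]
    [IsNoetherianRing R] (N M : ModuleCat.{u} R) [Module.Finite R N] [Module.Finite R M]
    {x : R} (hx : x ∈ maximalIdeal R) (hreg : IsSMulRegular N x) (i : ℕ)
    (h : Subsingleton (Ext (ModuleCat.of R (QuotSMulTop x N)) M (i + 1))) :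
    Subsingleton (Ext N M i) := by
  have hsurj (y : Ext N M i) : ∃ z : Ext N M i, x • z = y := by
    obtain ⟨z, hz⟩ := Ext.contravariant_sequence_exact₁ hreg.smulShortComplex_shortExact M y
      (add_comm 1 i) (h.elim _ _)
    change Ext N M i at z
    change (Ext.mk₀ (x • 𝟙 N)).comp z (zero_add i) = y at hz
    exact ⟨z, by rw [← hz, Ext.mk₀_smul, Ext.smul_comp, Ext.mk₀_id_comp]⟩
  by_contra! ntr
  have hjac : x ∈ (Module.annihilator R (Ext N M i)).jacobson :=
    IsLocalRing.maximalIdeal_le_jacobson _ hx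
  refine Submodule.top_ne_pointwise_smul_of_mem_jacobson_annihilator hjac
    (top_le_iff.mp fun y _ ↦ ?_).symm
  obtain ⟨z, rfl⟩ := hsurj y
  exact Submodule.smul_mem_pointwise_smul _ _ ⊤ trivial

open CategoryTheory Abelian in
lemma subsingleton_ext_of_linearEquiv {R : Type u} [CommRing R] {N N' : Type u}
    [AddCommGroup N] [Module R N] [AddCommGroup N'] [Module R N'] (e : N ≃ₗ[R] N')
    (M : ModuleCat.{u} R) (i : ℕ) (h : Subsingleton (Ext (ModuleCat.of R N') M i)) :
    Subsingleton (Ext (ModuleCat.of R N) M i) := by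
  refine subsingleton_of_forall_eq 0 fun y ↦ ?_
  rw [← Ext.mk₀_id_comp y, ← e.toModuleIso.hom_inv_id, ← Ext.mk₀_comp_mk₀_assoc,
    h.elim ((Ext.mk₀ e.toModuleIso.inv).comp y (zero_add i)) 0, Ext.comp_zero]

open CategoryTheory Abelian in
/-- If `Ext^{n+1}(-, M)` vanishes on finitely generated modules and `Ext^n(k, M) = 0` for the
residue field `k`, then `Ext^n(-, M)` vanishes on finitely generated modules. -/
lemma subsingleton_ext_of_subsingleton_ext_residueField {R : Type u} [CommRing R] [IsLocalRing R]
    [IsNoetherianRing R] (M : ModuleCat.{u} R) [Module.Finite R M] (n : ℕ)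
    (h : ∀ N : ModuleCat.{u} R, Module.Finite R N → Subsingleton (Ext N M (n + 1)))
    (hk : Subsingleton (Ext (ModuleCat.of R (R ⧸ maximalIdeal R)) M n))
    (N : Type u) [AddCommGroup N] [Module R N] [hN : Module.Finite R N] :
    Subsingleton (Ext (ModuleCat.of R N) M n) := by
  induction hN using IsNoetherianRing.induction_on_isQuotientEquivQuotientPrime R with
  | subsingleton N =>
    refine subsingleton_of_forall_eq 0 fun y ↦ ?_
    rw [← Ext.mk₀_id_comp y, (ModuleCat.isZero_of_subsingleton (.of R N)).eq_of_src (𝟙 _) 0,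
      Ext.mk₀_zero, Ext.zero_comp]
  | quotient N p e =>
    refine subsingleton_ext_of_linearEquiv e M n ?_
    obtain ⟨p, hp⟩ := p
    by_cases hpm : p = maximalIdeal R
    · subst hpm; exact hk
    · obtain ⟨x, hxm, hxp⟩ := SetLike.exists_of_lt
        (lt_of_le_of_ne (IsLocalRing.le_maximalIdeal hp.ne_top) hpm)
      refine subsingleton_ext_of_subsingleton_ext_quotSMulTop (ModuleCat.of R (R ⧸ p)) M hxm ?_ n
        (h _ inferInstance)
      refine IsSMulRegular.of_right_eq_zero_of_smul fun y hy ↦ ?_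
      obtain ⟨y, rfl⟩ := Ideal.Quotient.mk_surjective y
      change Ideal.Quotient.mk p (x * y) = 0 at hy
      rw [Ideal.Quotient.eq_zero_iff_mem] at hy ⊢
      exact (hp.mem_or_mem hy).resolve_left hxp
  | exact N₁ N₂ N₃ f g hf hg hfg h₁ h₃ =>
    refine subsingleton_of_forall_eq 0 fun y ↦ ?_
    obtain ⟨z, hz⟩ := Ext.contravariant_sequence_exact₂
      (shortExact_shortComplexOfCompEqZero hf hg hfg) M y (h₁.elim _ _)
    rw [← hz, h₃.elim z 0]
    exact Ext.comp_zero ..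

section Grade

lemma Module.isCM_iff_grade_eq_supportDim (R : Type*) [CommRing R] [IsLocalRing R]
    (M : Type*) [AddCommGroup M] [Module R M] [Module.Finite R M] : Module.IsCM R M ↔
    (Module.grade R (maximalIdeal R) M : WithBot ℕ∞) = Module.supportDim R M := by
  rw [Module.supportDim_eq_ringKrullDim_quotient_annihilator]
  rfl

variable {R : Type*} [CommRing R] [IsLocalRing R] [IsNoetherianRing R]
  {M : Type*} [AddCommGroup M] [Module R M] [Module.Finite R M]

/-- The length of an `M`-regular sequence is at most `dim M`. -/
lemma RingTheory.Sequence.IsRegular.length_le_supportDim {rs : List R} (h : IsRegular M rs) :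
    (rs.length : WithBot ℕ∞) ≤ Module.supportDim R M := by
  have : Nontrivial (M ⧸ Ideal.ofList rs • (⊤ : Submodule R M)) :=
    Submodule.Quotient.nontrivial_iff.mpr h.2.symm
  have : Nonempty (Module.support R (M ⧸ Ideal.ofList rs • (⊤ : Submodule R M))) :=
    Module.nonempty_support_of_nontrivial.to_subtype
  rw [← Module.supportDim_add_length_eq_supportDim_of_isRegular rs h]
  exact le_add_of_nonneg_left Order.krullDim_nonneg

variable (R M) in
lemma bddAbove_length_isRegular :
    BddAbove {n | ∃ rs : List R, rs.length = n ∧ (∀ r ∈ rs, r ∈ maximalIdeal R) ∧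
      IsRegular M rs} := by
  obtain ⟨d, hd⟩ : ∃ d : ℕ, ringKrullDim R = d := by
    generalize hd : ringKrullDim R = d
    induction d with
    | bot => exact absurd hd ringKrullDim_ne_bot
    | coe d =>
      induction d with
      | top => exact absurd hd ringKrullDim_ne_top
      | coe d => exact ⟨d, rfl⟩
  refine ⟨d, ?_⟩
  rintro _ ⟨rs, rfl, -, h⟩
  have := h.length_le_supportDim.trans ((Module.supportDim_le_ringKrullDim R M).trans hd.le)
  exact_mod_cast this

lemma RingTheory.Sequence.IsRegular.length_le_grade {rs : List R} (h : IsRegular M rs)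
    (hmem : ∀ r ∈ rs, r ∈ maximalIdeal R) : rs.length ≤ Module.grade R (maximalIdeal R) M :=
  le_csSup (bddAbove_length_isRegular R M) ⟨rs, rfl, hmem, h⟩

variable (R M) in
/-- There is an `M`-regular sequence whose length is the depth of `M`. -/
lemma exists_isRegular_length_eq_grade [Nontrivial M] :
    ∃ rs : List R, rs.length = Module.grade R (maximalIdeal R) M ∧
      (∀ r ∈ rs, r ∈ maximalIdeal R) ∧ IsRegular M rs :=
  Nat.sSup_mem (s := {n | ∃ rs : List R, rs.length = n ∧ (∀ r ∈ rs, r ∈ maximalIdeal R) ∧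
    IsRegular M rs}) ⟨0, [], rfl, by simp, .nil R M⟩ (bddAbove_length_isRegular R M)

variable (R M) in
lemma grade_le_supportDim [Nontrivial M] :
    (Module.grade R (maximalIdeal R) M : WithBot ℕ∞) ≤ Module.supportDim R M := by
  obtain ⟨rs, hlen, -, hreg⟩ := exists_isRegular_length_eq_grade R M
  exact hlen ▸ hreg.length_le_supportDim

/-- If `rs` is an `M`-regular sequence of maximal length, the residue field embeds into
`M / (rs) M`. -/
lemma exists_injective_residueField_of_length_eq_grade [Nontrivial M] {rs : List R}
    (hlen : rs.length = Module.grade R (maximalIdeal R) M)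
    (hmem : ∀ r ∈ rs, r ∈ maximalIdeal R) (hreg : IsRegular M rs) :
    ∃ f : (R ⧸ maximalIdeal R) →ₗ[R] M ⧸ Ideal.ofList rs • (⊤ : Submodule R M),
      Function.Injective f := by
  have hnontriv : ¬ Subsingleton
      ((R ⧸ maximalIdeal R) →ₗ[R] M ⧸ Ideal.ofList rs • (⊤ : Submodule R M)) := by
    rw [IsSMulRegular.subsingleton_linearMap_iff]
    rintro ⟨r, hr, hrreg⟩
    rw [Ideal.annihilator_quotient] at hr
    have hmem_append : ∀ s ∈ rs ++ [r], s ∈ maximalIdeal R := by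
      simpa [or_imp, forall_and] using ⟨hmem, hr⟩
    have := (RingTheory.Sequence.IsRegular.of_isWeaklyRegular_of_mem_maximalIdeal M hmem_append
      ((isWeaklyRegular_append_iff M rs [r]).mpr ⟨hreg.1,
        (isWeaklyRegular_singleton_iff _ _).mpr hrreg⟩)).length_le_grade hmem_append
    simp [hlen] at this
  have := not_subsingleton_iff_nontrivial.mp hnontriv
  obtain ⟨f, hf⟩ := exists_ne
    (0 : (R ⧸ maximalIdeal R) →ₗ[R] M ⧸ Ideal.ofList rs • (⊤ : Submodule R M))
  have : IsSimpleModule R (R ⧸ maximalIdeal R) :=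
    isSimpleModule_iff_isCoatom.mpr (maximalIdeal.isMaximal R).out
  exact ⟨f, f.injective_or_eq_zero.resolve_right hf⟩

end Grade

open CategoryTheory Abelian in
/-- For a finitely generated module `M` of finite injective dimension, `Ext^i(-, M)` vanishes on
finitely generated modules for `i > depth R`. -/
lemma Module.HasFiniteInjDim.subsingleton_ext_of_grade_lt {R M : Type u} [CommRing R]
    [IsLocalRing R] [IsNoetherianRing R] [AddCommGroup M] [Module R M] [Module.Finite R M]
    (hM : Module.HasFiniteInjDim R M) {i : ℕ} (hi : Module.grade R (maximalIdeal R) R < i)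
    (N : ModuleCat.{u} R) [Module.Finite R N] : Subsingleton (Ext N (ModuleCat.of R M) i) := by
  obtain ⟨n, hn⟩ := hM
  obtain ⟨k, hk⟩ : ∃ k, n < i + k := ⟨n + 1, by lia⟩
  induction k generalizing i N with
  | zero =>
    obtain ⟨j, rfl⟩ := Nat.exists_eq_add_one_of_ne_zero (Nat.ne_zero_of_lt hi)
    exact subsingleton_abelianExt_of_subsingleton_ext _ _ _ (hn N _ hk)
  | succ k ih =>
    refine subsingleton_ext_of_subsingleton_ext_residueField _ i
      (fun N _ ↦ ih (by lia) N (by lia)) ?_ N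
    obtain ⟨rs, hlen, hmem, hreg⟩ := exists_isRegular_length_eq_grade R R
    obtain ⟨f, hf⟩ := exists_injective_residueField_of_length_eq_grade hlen hmem hreg
    have hpd : projectiveDimension
        (ModuleCat.of R (R ⧸ Ideal.ofList rs • (⊤ : Submodule R R))) < i := by
      rw [ModuleCat.projectiveDimension_quotient_eq_add_length_of_isWeaklyRegular (.of R R) rs
        hreg.1 hmem, ModuleCat.projectiveDimension_eq_zero_of_projective, zero_add, hlen]
      exact_mod_cast hi
    rw [projectiveDimension_lt_iff] at hpd
    refine subsingleton_of_forall_eq 0 fun y ↦ ?_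
    obtain ⟨z, rfl⟩ := Ext.contravariant_sequence_exact₁ (shortExact_shortComplexOfCompEqZero hf
      (Submodule.mkQ_surjective _) (LinearMap.exact_map_mkQ_range f)) _ y (add_comm 1 i)
      ((ih (by lia) (.of R (_ ⧸ LinearMap.range f)) (by lia)).elim _ _)
    rw [(HasProjectiveDimensionLT.subsingleton _ i i le_rfl _).elim z 0]
    exact Ext.comp_zero ..

open CategoryTheory Abelian in
/-- One half of Ischebeck's theorem: if `M` has finite injective dimension and there is an
`N`-regular sequence of length `s`, then `Ext^i(N, M) = 0` for `i > depth R - s`. -/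
lemma Module.HasFiniteInjDim.subsingleton_ext_of_isWeaklyRegular {R M : Type u} [CommRing R]
    [IsLocalRing R] [IsNoetherianRing R] [AddCommGroup M] [Module R M] [Module.Finite R M]
    (hM : Module.HasFiniteInjDim R M) (rs : List R) (hmem : ∀ r ∈ rs, r ∈ maximalIdeal R)
    (N : ModuleCat.{u} R) [Module.Finite R N] (hreg : IsWeaklyRegular N rs) {i : ℕ}
    (hi : Module.grade R (maximalIdeal R) R < i + rs.length) :
    Subsingleton (Ext N (ModuleCat.of R M) i) := by
  induction rs generalizing N i with
  | nil => exact hM.subsingleton_ext_of_grade_lt hi N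
  | cons x rs ih =>
    rw [isWeaklyRegular_cons_iff] at hreg
    rw [List.forall_mem_cons] at hmem
    exact subsingleton_ext_of_subsingleton_ext_quotSMulTop N _ hmem.1 hreg.1 i
      (ih hmem.2 (.of R (QuotSMulTop x N)) hreg.2 (by simp at hi; lia))

open CategoryTheory Abelian in
lemma exists_lift_of_subsingleton_ext_one {R N M₁ M₂ M₃ : Type u} [CommRing R]
    [AddCommGroup N] [Module R N] [AddCommGroup M₁] [Module R M₁] [AddCommGroup M₂] [Module R M₂]
    [AddCommGroup M₃] [Module R M₃] {f : M₁ →ₗ[R] M₂} {g : M₂ →ₗ[R] M₃}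
    (hf : Function.Injective f) (hg : Function.Surjective g) (hfg : Function.Exact f g)
    (h : Subsingleton (Ext (ModuleCat.of R N) (ModuleCat.of R M₁) 1)) (φ : N →ₗ[R] M₃) :
    ∃ ψ : N →ₗ[R] M₂, g ∘ₗ ψ = φ := by
  obtain ⟨y, hy⟩ := Ext.covariant_sequence_exact₃ _
    (shortExact_shortComplexOfCompEqZero hf hg hfg) (Ext.mk₀ (ModuleCat.ofHom φ)) (zero_add 1)
    (h.elim _ _)
  obtain ⟨ψ, rfl⟩ := (Ext.mk₀_bijective _ _).2 y
  rw [Ext.mk₀_comp_mk₀] at hy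
  exact ⟨ψ.hom, ModuleCat.hom_ext_iff.mp ((Ext.mk₀_bijective _ _).1 hy)⟩

open CategoryTheory Abelian in
lemma exists_extend_of_subsingleton_ext_one {R N₁ N₂ N₃ M : Type u} [CommRing R]
    [AddCommGroup M] [Module R M] [AddCommGroup N₁] [Module R N₁] [AddCommGroup N₂] [Module R N₂]
    [AddCommGroup N₃] [Module R N₃] {f : N₁ →ₗ[R] N₂} {g : N₂ →ₗ[R] N₃}
    (hf : Function.Injective f) (hg : Function.Surjective g) (hfg : Function.Exact f g)
    (h : Subsingleton (Ext (ModuleCat.of R N₃) (ModuleCat.of R M) 1)) (φ : N₁ →ₗ[R] M) :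
    ∃ ψ : N₂ →ₗ[R] M, ψ ∘ₗ f = φ := by
  obtain ⟨y, hy⟩ := Ext.contravariant_sequence_exact₁
    (shortExact_shortComplexOfCompEqZero hf hg hfg) _ (Ext.mk₀ (ModuleCat.ofHom φ)) (add_zero 1)
    (h.elim _ _)
  obtain ⟨ψ, rfl⟩ := (Ext.mk₀_bijective _ _).2 y
  rw [Ext.mk₀_comp_mk₀] at hy
  exact ⟨ψ.hom, ModuleCat.hom_ext_iff.mp ((Ext.mk₀_bijective _ _).1 hy)⟩

open CategoryTheory Abelian Pointwise in
/-- If `Ext^i(N, M) = 0` for all `i > 0`, every weakly `M`-regular sequence is weakly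
`Hom(N, M)`-regular. -/
lemma isWeaklyRegular_linearMap_of_subsingleton_ext {R N M : Type u} [CommRing R]
    [AddCommGroup N] [Module R N] [AddCommGroup M] [Module R M] (rs : List R)
    (hreg : IsWeaklyRegular M rs)
    (h : ∀ i, Subsingleton (Ext (ModuleCat.of R N) (ModuleCat.of R M) (i + 1))) :
    IsWeaklyRegular (N →ₗ[R] M) rs := by
  induction rs generalizing M with
  | nil => exact .nil R _
  | cons x rs ih =>
    rw [isWeaklyRegular_cons_iff] at hreg ⊢
    obtain ⟨hx, hreg⟩ := hreg
    have hext (i : ℕ) :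
        Subsingleton (Ext (ModuleCat.of R N) (ModuleCat.of R (QuotSMulTop x M)) (i + 1)) := by
      refine subsingleton_of_forall_eq 0 fun y ↦ ?_
      obtain ⟨z, rfl⟩ := Ext.covariant_sequence_exact₃ _
        (IsSMulRegular.smulShortComplex_shortExact (M := .of R M) hx) y rfl ((h (i + 1)).elim _ _)
      rw [(h i).elim z 0]
      exact Ext.zero_comp ..
    refine ⟨.of_right_eq_zero_of_smul fun f hf ↦ LinearMap.ext fun n ↦
      hx.right_eq_zero_of_smul (LinearMap.congr_fun hf n), ?_⟩
    let F : (N →ₗ[R] M) →ₗ[R] (N →ₗ[R] QuotSMulTop x M) :=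
      LinearMap.compRight R (Submodule.mkQ _)
    have hF : Function.Surjective F := fun φ ↦
      exists_lift_of_subsingleton_ext_one (f := LinearMap.lsmul R M x) hx
        (Submodule.mkQ_surjective _) (LinearMap.exact_lsmul_mkQ_smul_top M x) (h 0) φ
    have hker : LinearMap.ker F = x • ⊤ := by
      ext f
      rw [LinearMap.mem_ker, Submodule.mem_smul_pointwise_iff_exists]
      refine ⟨fun hf ↦ ?_, ?_⟩
      · have hrange : ∀ n, f n ∈ LinearMap.range (LinearMap.lsmul R M x) := fun n ↦
          (LinearMap.exact_lsmul_mkQ_smul_top M x (f n)).mp (LinearMap.congr_fun hf n)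
        let e := LinearEquiv.ofInjective (LinearMap.lsmul R M x) hx
        refine ⟨e.symm.toLinearMap ∘ₗ f.codRestrict _ hrange, trivial, LinearMap.ext fun n ↦ ?_⟩
        exact congrArg Subtype.val (e.apply_symm_apply (f.codRestrict _ hrange n))
      · rintro ⟨g, -, rfl⟩
        exact LinearMap.ext fun n ↦
          (LinearMap.exact_lsmul_mkQ_smul_top M x (x • g n)).mpr ⟨g n, rfl⟩
    exact (((Submodule.quotEquivOfEq _ _ hker.symm).trans
      (F.quotKerEquivOfSurjective hF)).isWeaklyRegular_congr rs).mpr (ih hreg hext)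

/-- If `0 :_M a = bM` and `Ext^1(R/a, M) = 0`, then `M/bM ≅ Hom(a, M)`. -/
lemma nonempty_quotient_equiv_linearMap {R M : Type u} [CommRing R] [AddCommGroup M] [Module R M]
    {a : Ideal R} {N : Submodule R M} (hN : (⊥ : Submodule R M).colonBy a = N)
    (h : Subsingleton (CategoryTheory.Abelian.Ext (ModuleCat.of R (R ⧸ a)) (ModuleCat.of R M) 1)) :
    Nonempty ((M ⧸ N) ≃ₗ[R] (a →ₗ[R] M)) := by
  let F : M →ₗ[R] (a →ₗ[R] M) := (LinearMap.lsmul R M ∘ₗ a.subtype).flip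
  have hF : Function.Surjective F := fun φ ↦ by
    obtain ⟨ψ, rfl⟩ := exists_extend_of_subsingleton_ext_one a.subtype_injective
      (Submodule.mkQ_surjective a) (LinearMap.exact_subtype_mkQ a) h φ
    refine ⟨ψ 1, LinearMap.ext fun r ↦ ?_⟩
    change (r : R) • ψ 1 = ψ r
    rw [← map_smul, smul_eq_mul, mul_one]
  have hker : LinearMap.ker F = N := by
    ext m
    simp [← hN, Submodule.colonBy, LinearMap.ext_iff, F]
  exact ⟨(Submodule.quotEquivOfEq _ _ hker.symm).trans (F.quotKerEquivOfSurjective hF)⟩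

open CategoryTheory Abelian in
/-- If `M` is Cohen–Macaulay of finite injective dimension, `0 :_M a = N ≠ M` and
`depth R = depth R/a`, then `M/N` is Cohen–Macaulay. -/
lemma Module.IsCM.quotient_of_colonBy_eq {R M : Type u} [CommRing R] [IsLocalRing R]
    [IsNoetherianRing R] [AddCommGroup M] [Module R M] [Module.Finite R M]
    (hMCM : Module.IsCM R M) (hMinj : Module.HasFiniteInjDim R M) {a : Ideal R} (ha : a ≠ ⊤)
    {N : Submodule R M} (hN : (⊥ : Submodule R M).colonBy a = N) (hN_top : N ≠ ⊤)
    (hdepth : Module.grade R (maximalIdeal R) R = Module.grade R (maximalIdeal R) (R ⧸ a)) :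
    Module.IsCM R (M ⧸ N) := by
  have : Nontrivial (M ⧸ N) := Submodule.Quotient.nontrivial_iff.mpr hN_top
  have : Nontrivial M := (Submodule.mkQ_surjective N).nontrivial
  have : Nontrivial (R ⧸ a) := Ideal.Quotient.nontrivial_iff.mpr ha
  have hext (i : ℕ) : Subsingleton (Ext (ModuleCat.of R (R ⧸ a)) (ModuleCat.of R M) (i + 1)) := by
    obtain ⟨rs, hlen, hmem, hreg⟩ := exists_isRegular_length_eq_grade R (R ⧸ a)
    exact hMinj.subsingleton_ext_of_isWeaklyRegular rs hmem (.of R (R ⧸ a)) hreg.1 (by lia)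
  have hext_ideal (i : ℕ) : Subsingleton (Ext (ModuleCat.of R a) (ModuleCat.of R M) (i + 1)) := by
    refine subsingleton_of_forall_eq 0 fun y ↦ ?_
    obtain ⟨z, rfl⟩ := Ext.contravariant_sequence_exact₁ (shortExact_shortComplexOfCompEqZero
      a.subtype_injective (Submodule.mkQ_surjective a) (LinearMap.exact_subtype_mkQ a)) _ y
      (add_comm 1 (i + 1)) ((hext (i + 1)).elim _ _)
    change Ext (ModuleCat.of R R) (ModuleCat.of R M) (i + 1) at z
    rw [Ext.eq_zero_of_projective z]
    exact Ext.comp_zero ..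
  obtain ⟨e⟩ := nonempty_quotient_equiv_linearMap hN (hext 0)
  obtain ⟨rs, hlen, hmem, hreg⟩ := exists_isRegular_length_eq_grade R M
  have hreg_quot : IsRegular (M ⧸ N) rs := .of_isWeaklyRegular_of_mem_maximalIdeal _ hmem
    ((e.isWeaklyRegular_congr rs).mpr
      (isWeaklyRegular_linearMap_of_subsingleton_ext rs hreg.1 hext_ideal))
  rw [Module.isCM_iff_grade_eq_supportDim] at hMCM ⊢
  refine (grade_le_supportDim R (M ⧸ N)).antisymm ?_
  calc Module.supportDim R (M ⧸ N) ≤ Module.supportDim R M :=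
        Module.supportDim_le_of_surjective _ (Submodule.mkQ_surjective N)
    _ = rs.length := by rw [← hMCM, hlen]
    _ ≤ _ := by exact_mod_cast hreg_quot.length_le_grade hmem

/-- Let `(R, m)` be a local ring, `M` a Cohen–Macaulay module of finite injective
dimension, and `a ∼_{(0;M)} b`.  If `depth R = depth R/a = depth R/b`, then `M/aM` is
Cohen–Macaulay iff `M/bM` is Cohen–Macaulay. -/
theorem cm_quot_iff_of_linked {R M : Type u} [CommRing R] [IsLocalRing R] [IsNoetherianRing R]
    [AddCommGroup M] [Module R M] [Module.Finite R M]
    (hMCM : Module.IsCM R M) (hMinj : Module.HasFiniteInjDim R M)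
    (a b : Ideal R)
    (hab : (⊥ : Submodule R M).colonBy a = b • ⊤ ∧ (⊥ : Submodule R M).colonBy b = a • ⊤)
    (haM : a • (⊤ : Submodule R M) ≠ ⊤) (hbM : b • (⊤ : Submodule R M) ≠ ⊤)
    (hdeptha : Module.grade R (maximalIdeal R) R = Module.grade R (maximalIdeal R) (R ⧸ a))
    (hdepthb : Module.grade R (maximalIdeal R) R = Module.grade R (maximalIdeal R) (R ⧸ b)) :
    Module.IsCM R (M ⧸ (a • ⊤ : Submodule R M)) ↔
      Module.IsCM R (M ⧸ (b • ⊤ : Submodule R M)) := by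
  have ha : a ≠ ⊤ := by rintro rfl; simp at haM
  have hb : b ≠ ⊤ := by rintro rfl; simp at hbM
  exact iff_of_true (hMCM.quotient_of_colonBy_eq hMinj hb hab.2 haM hdepthb)
    (hMCM.quotient_of_colonBy_eq hMinj ha hab.1 hbM hdeptha)
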